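/- For all named GS4 derivations P with conclusion ⊢Γ, the vertex set of the branch-labeled axiom graph is the name set of the conclusion and its branch set is included in that of the conclusion: V_{⟨⟨P⟩⟩} = names(Γ) and Br(⟨⟨P⟩⟩) ⊆ Br(Γ). -/

import Mathlib

open scoped Classical

noncomputable section

namespace GS4

/-- Named classical propositional formulas over atoms `α`, with names in `ℕ`. -/
inductive NForm (α : Type) : Type
  | atom : ℕ → α → NForm α
  | or   : NForm α → NForm α → NForm α
  | and  : NForm α → NForm α → NForm α

variable {α : Type}

/-- Name-preserving De Morgan negation, w.r.t. an involution `bar` on atoms. -/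
def negF (bar : α → α) : NForm α → NForm α
  | .atom x a => .atom x (bar a)
  | .or A B => .and (negF bar A) (negF bar B)
  | .and A B => .or (negF bar A) (negF bar B)

/-- The set of names occurring in a named formula. -/
def NForm.names : NForm α → Set ℕ
  | .atom x _ => {x}
  | .or A B => A.names ∪ B.names
  | .and A B => A.names ∪ B.names

/-- A named formula is sharing-free if every name occurs at most once in it. -/
def NForm.sharingFree : NForm α → Prop
  | .atom _ _ => True
  | .or A B => A.sharingFree ∧ B.sharingFree ∧ Disjoint A.names B.names
  | .and A B => A.sharingFree ∧ B.sharingFree ∧ Disjoint A.names B.names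

def NForm.isAtom : NForm α → Prop
  | .atom _ _ => True
  | _ => False

/-- Anonymous formulas (shapes): `A ≡ B` iff their shapes coincide. -/
inductive Shape (α : Type) : Type
  | atom : α → Shape α
  | or   : Shape α → Shape α → Shape α
  | and  : Shape α → Shape α → Shape α

def NForm.shape : NForm α → Shape α
  | .atom _ a => .atom a
  | .or A B => .or A.shape B.shape
  | .and A B => .and A.shape B.shape

/-- `HasAtom A x a`: the atomic formula `x:a` occurs in `A`. -/
def HasAtom : NForm α → ℕ → α → Prop
  | .atom y b, x, a => y = x ∧ b = a
  | .or A B, x, a => HasAtom A x a ∨ HasAtom B x a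
  | .and A B, x, a => HasAtom A x a ∨ HasAtom B x a

/-- Names of a finite set of named formulas. -/
def snames (Γ : Finset (NForm α)) : Set ℕ := ⋃ A ∈ Γ, A.names

/-- A finite set of named formulas is sharing-free if all its elements are
sharing-free with pairwise disjoint name sets. -/
def SFSet (Γ : Finset (NForm α)) : Prop :=
  (∀ A ∈ Γ, A.sharingFree) ∧
  ∀ A ∈ Γ, ∀ B ∈ Γ, A ≠ B → Disjoint A.names B.names

/-- `x:a` occurs in some formula of `Γ` (i.e. `Γ[x] = a` for sharing-free `Γ`). -/
def HasAtomS (Γ : Finset (NForm α)) (x : ℕ) (a : α) : Prop :=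
  ∃ A ∈ Γ, HasAtom A x a

/-- Branch sets of named formulas. -/
def BrF : NForm α → Set (Set ℕ)
  | .atom x _ => {{x}}
  | .or A B => {X | ∃ Y ∈ BrF A, ∃ Z ∈ BrF B, X = Y ∪ Z}
  | .and A B => BrF A ∪ BrF B

/-- Branch sets of sequents (finite sharing-free sets of named formulas). -/
def BrS (Γ : Finset (NForm α)) : Set (Set ℕ) :=
  {X | X ⊆ snames Γ ∧ ∀ A ∈ Γ, X ∩ A.names ∈ BrF A}

/-! ## Branch-labeled name graphs -/

/-- A branch-labeled name graph: vertices and a relation between unordered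
pairs of vertices and branch labels. -/
structure BLGraph : Type where
  verts : Set ℕ
  rel : Sym2 ℕ → Set ℕ → Prop

/-- Well-formedness of a bl-graph: related pairs consist of distinct vertices,
labels are sets of vertices, and each edge is included in its labels. -/
def BLGraph.IsBL (G : BLGraph) : Prop :=
  ∀ e X, G.rel e X → ¬ e.IsDiag ∧ X ⊆ G.verts ∧ ∀ v ∈ e, v ∈ X

def BLGraph.Edges (G : BLGraph) : Set (Sym2 ℕ) := {e | ∃ X, G.rel e X}

def BLGraph.Br (G : BLGraph) : Set (Set ℕ) := {X | ∃ e, G.rel e X}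

def BLGraph.union (G H : BLGraph) : BLGraph :=
  ⟨G.verts ∪ H.verts, fun e X => G.rel e X ∨ H.rel e X⟩

/-- Restriction `G↾_S` of a bl-graph. -/
def BLGraph.restrict (G : BLGraph) (S : Set ℕ) : BLGraph :=
  ⟨G.verts ∩ S, fun e X => G.rel e X ∧ X ⊆ S⟩

/-- The interface-relativized edge-branch relation `e ⊰^I_G X`. -/
def BLGraph.relI (G : BLGraph) (I : Set ℕ) (e : Sym2 ℕ) (X : Set ℕ) : Prop :=
  ∃ Y, G.rel e Y ∧ X = Y \ I

/-- `z 0, …, z (n-1)` is an `X`-labeled alternating path between `G` and `H`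
through the interface `I`. -/
def AltPath (G H : BLGraph) (I X : Set ℕ) (n : ℕ) (z : ℕ → ℕ) : Prop :=
  1 < n ∧
  (∀ i < n, ∀ j < n, z i = z j → i = j) ∧
  (∀ i, 0 < i → i + 1 < n → z i ∈ I) ∧
  ((∀ i, i + 1 < n →
      (Even i → G.relI I s(z i, z (i + 1)) X) ∧ (¬ Even i → H.relI I s(z i, z (i + 1)) X)) ∨
   (∀ i, i + 1 < n →
      (Even i → H.relI I s(z i, z (i + 1)) X) ∧ (¬ Even i → G.relI I s(z i, z (i + 1)) X)))

/-- Composition of bl-graphs over an interface `I`. -/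
def BLGraph.comp (G H : BLGraph) (I : Set ℕ) : BLGraph :=
  ⟨(G.verts ∪ H.verts) \ I,
   fun e X => ∃ n z, AltPath G H I X n z ∧ z 0 ∉ I ∧ z (n - 1) ∉ I ∧
     e = s(z 0, z (n - 1))⟩

/-- The weakening operator on bl-graphs: add vertices `V` and extend every
branch label by a member of `Brs`. -/
def blwk (V : Set ℕ) (Brs : Set (Set ℕ)) (G : BLGraph) : BLGraph :=
  ⟨G.verts ∪ V, fun e X => ∃ Y Z, G.rel e Y ∧ Z ∈ Brs ∧ X = Y ∪ Z⟩

/-- The bl-identity graph `id_{A,C}` on a pair of dual formulas. -/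
def blid : NForm α → NForm α → BLGraph
  | .atom x _, .atom y _ => ⟨{x, y}, fun e X => e = s(x, y) ∧ X = {x, y}⟩
  | .or A1 A2, .and C1 C2 =>
      (blwk A2.names (BrF A2) (blid A1 C1)).union (blwk A1.names (BrF A1) (blid A2 C2))
  | .and A1 A2, .or C1 C2 =>
      (blwk C2.names (BrF C2) (blid A1 C1)).union (blwk C1.names (BrF C1) (blid A2 C2))
  | _, _ => ⟨∅, fun _ _ => False⟩

/-! ## Simple name graphs -/

/-- A simple name graph. -/
structure NGraph : Type where
  verts : Set ℕ
  edges : Set (Sym2 ℕ)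

/-- Subgraph relation `H ⊑ G`. -/
def NGraph.Sub (H G : NGraph) : Prop := H.verts ⊆ G.verts ∧ H.edges ⊆ G.edges

def NGraph.union (G H : NGraph) : NGraph := ⟨G.verts ∪ H.verts, G.edges ∪ H.edges⟩

/-- Induced subgraph `G↾_S`. -/
def NGraph.restrict (G : NGraph) (S : Set ℕ) : NGraph :=
  ⟨G.verts ∩ S, {e ∈ G.edges | ∀ v ∈ e, v ∈ S}⟩

/-- Alternating paths between simple name graphs through an interface. -/
def NAltPath (G H : NGraph) (I : Set ℕ) (n : ℕ) (z : ℕ → ℕ) : Prop :=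
  0 < n ∧
  (∀ i < n, ∀ j < n, z i = z j → i = j) ∧
  (∀ i, 0 < i → i + 1 < n → z i ∈ I) ∧
  ((∀ i, i + 1 < n →
      (Even i → s(z i, z (i + 1)) ∈ G.edges) ∧ (¬ Even i → s(z i, z (i + 1)) ∈ H.edges)) ∨
   (∀ i, i + 1 < n →
      (Even i → s(z i, z (i + 1)) ∈ H.edges) ∧ (¬ Even i → s(z i, z (i + 1)) ∈ G.edges)))

/-- Composition of simple name graphs over an interface. -/
def NGraph.comp (G H : NGraph) (I : Set ℕ) : NGraph :=
  ⟨(G.verts ∪ H.verts) \ I,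
   {e | ∃ x y, x ≠ y ∧ x ∈ (G.verts ∪ H.verts) \ I ∧ y ∈ (G.verts ∪ H.verts) \ I ∧
        e = s(x, y) ∧ ∃ n z, NAltPath G H I n z ∧ z 0 = x ∧ z (n - 1) = y}⟩

/-- The identity graph `Id_{A,C}` on a pair of dual formulas. -/
def idg : NForm α → NForm α → NGraph
  | .atom x _, .atom y _ => ⟨{x, y}, {s(x, y)}⟩
  | .or A1 A2, .and C1 C2 => (idg A1 C1).union (idg A2 C2)
  | .and A1 A2, .or C1 C2 => (idg A1 C1).union (idg A2 C2)
  | _, _ => ⟨∅, ∅⟩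

/-- The edgeless (weakening) graph on the names of `Γ`. -/
def wkg (Γ : Finset (NForm α)) : NGraph := ⟨snames Γ, ∅⟩

/-! ## Named GS4 derivations -/

/-- Named GS4 derivation trees. -/
inductive Deriv (α : Type) : Type
  | ax (Γ : Finset (NForm α)) (A C : NForm α)
  | cut (A : NForm α) (P Q : Deriv α)
  | sup (P Q : Deriv α)
  | orI (A B : NForm α) (P : Deriv α)
  | andI (A B : NForm α) (P Q : Deriv α)

/-- Conclusion of a derivation tree. -/
def concl : Deriv α → Finset (NForm α)
  | .ax Γ A C => insert A (insert C Γ)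
  | .cut A P _ => (concl P).erase A
  | .sup P _ => concl P
  | .orI A B P => insert (NForm.or A B) (((concl P).erase A).erase B)
  | .andI A B P _ => insert (NForm.and A B) ((concl P).erase A)

/-- Well-formedness of derivation trees w.r.t. the atom involution `bar`:
each rule is applied correctly to sharing-free named sequents. -/
def WF (bar : α → α) : Deriv α → Prop
  | .ax Γ A C =>
      A.shape = (negF bar C).shape ∧
      A.sharingFree ∧ C.sharingFree ∧ SFSet Γ ∧
      Disjoint A.names C.names ∧
      Disjoint A.names (snames Γ) ∧ Disjoint C.names (snames Γ)
  | .cut A P Q =>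
      WF bar P ∧ WF bar Q ∧
      ∃ Γ : Finset (NForm α), A ∉ Γ ∧ negF bar A ∉ Γ ∧
        concl P = insert A Γ ∧ concl Q = insert (negF bar A) Γ ∧
        A.sharingFree ∧ SFSet Γ ∧ Disjoint A.names (snames Γ)
  | .sup P Q => WF bar P ∧ WF bar Q ∧ concl P = concl Q
  | .orI A B P =>
      WF bar P ∧
      ∃ Γ : Finset (NForm α), A ∉ Γ ∧ B ∉ Γ ∧ A ≠ B ∧
        concl P = insert A (insert B Γ) ∧
        A.sharingFree ∧ B.sharingFree ∧ SFSet Γ ∧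
        Disjoint A.names B.names ∧
        Disjoint A.names (snames Γ) ∧ Disjoint B.names (snames Γ)
  | .andI A B P Q =>
      WF bar P ∧ WF bar Q ∧
      ∃ Γ : Finset (NForm α), A ∉ Γ ∧ B ∉ Γ ∧
        concl P = insert A Γ ∧ concl Q = insert B Γ ∧
        A.sharingFree ∧ B.sharingFree ∧ SFSet Γ ∧
        Disjoint A.names B.names ∧
        Disjoint A.names (snames Γ) ∧ Disjoint B.names (snames Γ)

/-- A derivation is cut-free if it contains no cut rule. -/
def CutFree : Deriv α → Prop
  | .ax _ _ _ => True
  | .cut _ _ _ => False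
  | .sup P Q => CutFree P ∧ CutFree Q
  | .orI _ _ P => CutFree P
  | .andI _ _ P Q => CutFree P ∧ CutFree Q

/-- The branch-labeled axiom graph `⟨⟨P⟩⟩` of a derivation. -/
def blaxg : Deriv α → BLGraph
  | .ax Γ A C => blwk (snames Γ) (BrS Γ) (blid A C)
  | .cut A P Q => BLGraph.comp (blaxg P) (blaxg Q) A.names
  | .sup P Q => (blaxg P).union (blaxg Q)
  | .orI _ _ P => blaxg P
  | .andI _ _ P Q => (blaxg P).union (blaxg Q)

/-- The (simple) axiom graph `⟦P⟧` of a derivation. -/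
def axg : Deriv α → NGraph
  | .ax Γ A C => (wkg Γ).union (idg A C)
  | .cut A P Q => NGraph.comp (axg P) (axg Q) A.names
  | .sup P Q => (axg P).union (axg Q)
  | .orI _ _ P => axg P
  | .andI _ _ P Q => (axg P).union (axg Q)

/-! ## Inversion and isolation -/

/-- Inversion of a disjunction `D ∨ E` in the conclusion. -/
def inv (D E : NForm α) : Deriv α → Deriv α
  | .ax Γ A C =>
      if A = NForm.or D E then
        match C with
        | .and C1 C2 =>
            .andI C1 C2 (.ax (insert E Γ) D C1) (.ax (insert D Γ) E C2)
        | _ => .ax Γ A C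
      else if C = NForm.or D E then
        match A with
        | .and A1 A2 =>
            .andI A1 A2 (.ax (insert E Γ) A1 D) (.ax (insert D Γ) A2 E)
        | _ => .ax Γ A C
      else
        .ax (insert D (insert E (Γ.erase (NForm.or D E)))) A C
  | .cut A P Q => .cut A (inv D E P) (inv D E Q)
  | .sup P Q => .sup (inv D E P) (inv D E Q)
  | .orI A B P => if A = D ∧ B = E then P else .orI A B (inv D E P)
  | .andI A B P Q => .andI A B (inv D E P) (inv D E Q)

/-- Left inversion of a conjunction `D ∧ E` in the conclusion. -/
def invl (D E : NForm α) : Deriv α → Deriv α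
  | .ax Γ A C =>
      if A = NForm.and D E then
        match C with
        | .or C1 C2 => .orI C1 C2 (.ax (insert C2 Γ) D C1)
        | _ => .ax Γ A C
      else if C = NForm.and D E then
        match A with
        | .or A1 A2 => .orI A1 A2 (.ax (insert A2 Γ) A1 D)
        | _ => .ax Γ A C
      else
        .ax (insert D (Γ.erase (NForm.and D E))) A C
  | .cut A P Q => .cut A (invl D E P) (invl D E Q)
  | .sup P Q => .sup (invl D E P) (invl D E Q)
  | .orI A B P => .orI A B (invl D E P)
  | .andI A B P Q => if A = D ∧ B = E then P else .andI A B (invl D E P) (invl D E Q)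

/-- Right inversion of a conjunction `D ∧ E` in the conclusion. -/
def invr (D E : NForm α) : Deriv α → Deriv α
  | .ax Γ A C =>
      if A = NForm.and D E then
        match C with
        | .or C1 C2 => .orI C1 C2 (.ax (insert C1 Γ) E C2)
        | _ => .ax Γ A C
      else if C = NForm.and D E then
        match A with
        | .or A1 A2 => .orI A1 A2 (.ax (insert A1 Γ) A2 E)
        | _ => .ax Γ A C
      else
        .ax (insert E (Γ.erase (NForm.and D E))) A C
  | .cut A P Q => .cut A (invr D E P) (invr D E Q)
  | .sup P Q => .sup (invr D E P) (invr D E Q)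
  | .orI A B P => .orI A B (invr D E P)
  | .andI A B P Q => if A = D ∧ B = E then Q else .andI A B (invr D E P) (invr D E Q)

/-- Isolation of a non-atomic formula in the conclusion. -/
def isl : NForm α → Deriv α → Deriv α
  | .or A B, P => .orI A B (inv A B P)
  | .and A B, P => .andI A B (invl A B P) (invr A B P)
  | .atom _ _, P => P

/-- Totality of a bl-graph w.r.t. a sharing-free named sequent. -/
def Total (bar : α → α) (G : BLGraph) (Γ : Finset (NForm α)) : Prop :=
  G.verts = snames Γ ∧
  G.Br = BrS Γ ∧
  ∀ x y : ℕ, s(x, y) ∈ G.Edges →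
    ∀ a b : α, HasAtomS Γ x a → HasAtomS Γ y b → a = bar b

end GS4

namespace GS4

variable {α : Type}

theorem names_negF (bar : α → α) (A : NForm α) : (negF bar A).names = A.names := by
  induction A with
  | atom => rfl
  | or A B ihA ihB => simp [negF, NForm.names, ihA, ihB]
  | and A B ihA ihB => simp [negF, NForm.names, ihA, ihB]

theorem subset_names_of_mem_BrF {A : NForm α} {X : Set ℕ} (h : X ∈ BrF A) : X ⊆ A.names := by
  induction A generalizing X with
  | atom x a => exact (show X = {x} from h).subset
  | or A B ihA ihB =>
    obtain ⟨Y, hY, Z, hZ, rfl⟩ := h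
    exact Set.union_subset_union (ihA hY) (ihB hZ)
  | and A B ihA ihB =>
    rcases h with h | h
    · exact (ihA h).trans Set.subset_union_left
    · exact (ihB h).trans Set.subset_union_right

theorem snames_insert (A : NForm α) (Γ : Finset (NForm α)) :
    snames (insert A Γ) = A.names ∪ snames Γ := by
  simp [snames]

theorem names_subset_snames {A : NForm α} {Γ : Finset (NForm α)} (h : A ∈ Γ) :
    A.names ⊆ snames Γ :=
  Set.subset_biUnion_of_mem (u := fun A : NForm α => A.names) h

/-- Membership in the branch set of a sequent, with one formula singled out. -/
theorem mem_BrS_insert {A : NForm α} {Γ : Finset (NForm α)}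
    (h : Disjoint A.names (snames Γ)) {X : Set ℕ} :
    X ∈ BrS (insert A Γ) ↔ X ∩ A.names ∈ BrF A ∧ X \ A.names ∈ BrS Γ := by
  have key : ∀ B ∈ Γ, (X \ A.names) ∩ B.names = X ∩ B.names := by
    intro B hB
    have hd := Set.disjoint_left.1 (h.mono_right (names_subset_snames hB))
    ext x
    simp only [Set.mem_inter_iff, Set.mem_sdiff]
    exact ⟨fun hx => ⟨hx.1.1, hx.2⟩, fun hx => ⟨⟨hx.1, fun hA => hd hA hx.2⟩, hx.2⟩⟩
  simp only [BrS, Set.mem_ofPred_eq, snames_insert, Finset.mem_insert, forall_eq_or_imp,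
    Set.sdiff_subset_iff]
  constructor
  · rintro ⟨hX, hA, hΓ⟩
    exact ⟨hA, hX, fun B hB => (key B hB).symm ▸ hΓ B hB⟩
  · rintro ⟨hA, hX, hΓ⟩
    exact ⟨hX, hA, fun B hB => key B hB ▸ hΓ B hB⟩

/-- The vertices of the bl-identity are the names of its two formulas, and each of its labels joins
a branch of the one to a branch of the other. -/
theorem blid_verts_and_labels (bar : α → α) {A C : NForm α} (hs : A.shape = (negF bar C).shape) :
    (blid A C).verts = A.names ∪ C.names ∧
      ∀ e X, (blid A C).rel e X → ∃ Y ∈ BrF A, ∃ Z ∈ BrF C, X = Y ∪ Z := by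
  induction A generalizing C with
  | atom x a =>
    cases C with
    | atom y b =>
      refine ⟨rfl, ?_⟩
      rintro e X ⟨-, rfl⟩
      exact ⟨{x}, rfl, {y}, rfl, rfl⟩
    | or C₁ C₂ => simp [negF, NForm.shape] at hs
    | and C₁ C₂ => simp [negF, NForm.shape] at hs
  | or A₁ A₂ ih₁ ih₂ =>
    cases C with
    | atom y b => simp [negF, NForm.shape] at hs
    | or C₁ C₂ => simp [negF, NForm.shape] at hs
    | and C₁ C₂ =>
      simp only [negF, NForm.shape, Shape.or.injEq] at hs
      obtain ⟨hv₁, hr₁⟩ := ih₁ hs.1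
      obtain ⟨hv₂, hr₂⟩ := ih₂ hs.2
      constructor
      · simp only [blid, BLGraph.union, blwk, NForm.names, hv₁, hv₂]
        ext; simp only [Set.mem_union]; tauto
      · rintro e X (⟨Y, Z, hY, hZ, rfl⟩ | ⟨Y, Z, hY, hZ, rfl⟩)
        · obtain ⟨U, hU, W, hW, rfl⟩ := hr₁ e Y hY
          exact ⟨U ∪ Z, ⟨U, hU, Z, hZ, rfl⟩, W, Or.inl hW, Set.union_right_comm ..⟩
        · obtain ⟨U, hU, W, hW, rfl⟩ := hr₂ e Y hY
          exact ⟨Z ∪ U, ⟨Z, hZ, U, hU, rfl⟩, W, Or.inr hW, by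
            rw [Set.union_right_comm, Set.union_comm U Z]⟩
  | and A₁ A₂ ih₁ ih₂ =>
    cases C with
    | atom y b => simp [negF, NForm.shape] at hs
    | and C₁ C₂ => simp [negF, NForm.shape] at hs
    | or C₁ C₂ =>
      simp only [negF, NForm.shape, Shape.and.injEq] at hs
      obtain ⟨hv₁, hr₁⟩ := ih₁ hs.1
      obtain ⟨hv₂, hr₂⟩ := ih₂ hs.2
      constructor
      · simp only [blid, BLGraph.union, blwk, NForm.names, hv₁, hv₂]
        ext; simp only [Set.mem_union]; tauto
      · rintro e X (⟨Y, Z, hY, hZ, rfl⟩ | ⟨Y, Z, hY, hZ, rfl⟩)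
        · obtain ⟨U, hU, W, hW, rfl⟩ := hr₁ e Y hY
          exact ⟨U, Or.inl hU, W ∪ Z, ⟨W, hW, Z, hZ, rfl⟩, Set.union_assoc ..⟩
        · obtain ⟨U, hU, W, hW, rfl⟩ := hr₂ e Y hY
          exact ⟨U, Or.inr hU, Z ∪ W, ⟨Z, hZ, W, hW, rfl⟩, by
            rw [Set.union_assoc, Set.union_comm W Z]⟩

/-- Joining a branch of a formula to a branch of a disjoint sequent. -/
theorem union_mem_BrS_insert {A : NForm α} {Γ : Finset (NForm α)}
    (h : Disjoint A.names (snames Γ)) {Y Z : Set ℕ} (hY : Y ∈ BrF A) (hZ : Z ∈ BrS Γ) :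
    Y ∪ Z ∈ BrS (insert A Γ) := by
  have hYA := subset_names_of_mem_BrF hY
  have hZA : Disjoint Z A.names := h.symm.mono_left hZ.1
  rw [mem_BrS_insert h, Set.union_inter_distrib_right, hZA.inter_eq, Set.union_empty,
    Set.inter_eq_left.2 hYA, Set.union_sdiff_distrib, Set.sdiff_eq_empty.2 hYA, Set.empty_union,
    hZA.sdiff_eq_left]
  exact ⟨hY, hZ⟩

/-- A branch of `Γ, A` splits into a branch of `A` and one of `Γ`. -/
theorem exists_union_of_mem_BrS_insert {A : NForm α} {Γ : Finset (NForm α)}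
    (h : Disjoint A.names (snames Γ)) {X : Set ℕ} (hX : X ∈ BrS (insert A Γ)) :
    ∃ Y ∈ BrF A, ∃ Z ∈ BrS Γ, X = Y ∪ Z := by
  rw [mem_BrS_insert h] at hX
  exact ⟨_, hX.1, _, hX.2, (Set.inter_union_sdiff X A.names).symm⟩

/-- Every label of a composite is a label of one of the two graphs with the interface removed. -/
theorem exists_of_mem_Br_comp {G H : BLGraph} {I X : Set ℕ} (hX : X ∈ (G.comp H I).Br) :
    ∃ Y ∈ G.Br ∪ H.Br, X = Y \ I := by
  obtain ⟨_, n, z, ⟨hn, -, -, hz⟩, -⟩ := hX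
  rcases hz with hz | hz
  · obtain ⟨Y, hY, rfl⟩ := (hz 0 hn).1 Even.zero
    exact ⟨Y, Or.inl ⟨_, hY⟩, rfl⟩
  · obtain ⟨Y, hY, rfl⟩ := (hz 0 hn).1 Even.zero
    exact ⟨Y, Or.inr ⟨_, hY⟩, rfl⟩

end GS4

/-- the vertices of the branch-labeled axiom graph are the
names of the conclusion, and its branches are among those of the conclusion. -/
theorem GS4.blaxg_names_branches {α : Type} (bar : α → α)
    (hbar : Function.Involutive bar) (hfix : ∀ a, bar a ≠ a)
    (P : GS4.Deriv α) (hP : GS4.WF bar P) :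
    (GS4.blaxg P).verts = GS4.snames (GS4.concl P) ∧
    (GS4.blaxg P).Br ⊆ GS4.BrS (GS4.concl P) := by
  induction P with
  | ax Γ A C =>
    obtain ⟨hs, -, -, -, hAC, hAΓ, hCΓ⟩ := hP
    obtain ⟨hv, hr⟩ := blid_verts_and_labels bar hs
    have hACΓ : Disjoint A.names (snames (insert C Γ)) := by
      rw [snames_insert, Set.disjoint_union_right]
      exact ⟨hAC, hAΓ⟩
    constructor
    · simp only [concl, snames_insert, blaxg, blwk, hv, Set.union_assoc]
    · rintro _ ⟨e, Y, Z, hY, hZ, rfl⟩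
      obtain ⟨U, hU, W, hW, rfl⟩ := hr e Y hY
      rw [Set.union_assoc]
      exact union_mem_BrS_insert hACΓ hU (union_mem_BrS_insert hCΓ hW hZ)
  | cut A P Q ihP ihQ =>
    obtain ⟨hP, hQ, Γ, hAΓ, -, hcP, hcQ, -, -, hd⟩ := hP
    obtain ⟨hvP, hbP⟩ := ihP hP
    obtain ⟨hvQ, hbQ⟩ := ihQ hQ
    have hd' : Disjoint (negF bar A).names (snames Γ) := by rwa [names_negF]
    have hc : concl (.cut A P Q) = Γ := by rw [concl, hcP, Finset.erase_insert hAΓ]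
    rw [hcP] at hvP hbP
    rw [hcQ] at hvQ hbQ
    rw [hc]
    constructor
    · rw [blaxg, BLGraph.comp, hvP, hvQ, snames_insert, snames_insert, names_negF, Set.union_self,
        Set.union_sdiff_left, hd.symm.sdiff_eq_left]
    · intro X hX
      obtain ⟨Y, hY | hY, rfl⟩ := exists_of_mem_Br_comp hX
      · exact ((mem_BrS_insert hd).1 (hbP hY)).2
      · have h := ((mem_BrS_insert hd').1 (hbQ hY)).2
        rwa [names_negF] at h
  | sup P Q ihP ihQ =>
    obtain ⟨hP, hQ, hc⟩ := hP
    obtain ⟨hvP, hbP⟩ := ihP hP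
    obtain ⟨hvQ, hbQ⟩ := ihQ hQ
    rw [← hc] at hvQ hbQ
    constructor
    · rw [blaxg, BLGraph.union, hvP, hvQ, Set.union_self, concl]
    · rintro X ⟨e, h | h⟩
      · exact hbP ⟨e, h⟩
      · exact hbQ ⟨e, h⟩
  | orI A B P ihP =>
    obtain ⟨hP, Γ, hAΓ, hBΓ, hAB, hcP, -, -, -, hdAB, hdA, hdB⟩ := hP
    obtain ⟨hvP, hbP⟩ := ihP hP
    have hc : concl (.orI A B P) = insert (.or A B) Γ := by
      rw [concl, hcP, Finset.erase_insert (by simp [hAB, hAΓ]), Finset.erase_insert hBΓ]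
    have hdAΓ : Disjoint A.names (snames (insert B Γ)) := by
      rw [snames_insert, Set.disjoint_union_right]
      exact ⟨hdAB, hdA⟩
    have hd : Disjoint (NForm.or A B).names (snames Γ) := Set.disjoint_union_left.2 ⟨hdA, hdB⟩
    rw [hcP] at hvP hbP
    rw [hc]
    constructor
    · rw [blaxg, hvP, snames_insert, snames_insert, snames_insert, NForm.names, Set.union_assoc]
    · intro X hX
      obtain ⟨Y, hY, V, hV, rfl⟩ := exists_union_of_mem_BrS_insert hdAΓ (hbP hX)
      obtain ⟨Z, hZ, W, hW, rfl⟩ := exists_union_of_mem_BrS_insert hdB hV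
      rw [← Set.union_assoc]
      exact union_mem_BrS_insert hd ⟨Y, hY, Z, hZ, rfl⟩ hW
  | andI A B P Q ihP ihQ =>
    obtain ⟨hP, hQ, Γ, hAΓ, -, hcP, hcQ, -, -, -, -, hdA, hdB⟩ := hP
    obtain ⟨hvP, hbP⟩ := ihP hP
    obtain ⟨hvQ, hbQ⟩ := ihQ hQ
    have hc : concl (.andI A B P Q) = insert (.and A B) Γ := by
      rw [concl, hcP, Finset.erase_insert hAΓ]
    have hd : Disjoint (NForm.and A B).names (snames Γ) := Set.disjoint_union_left.2 ⟨hdA, hdB⟩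
    rw [hcP] at hvP hbP
    rw [hcQ] at hvQ hbQ
    rw [hc]
    constructor
    · rw [blaxg, BLGraph.union, hvP, hvQ, snames_insert, snames_insert, snames_insert, NForm.names,
        ← Set.union_union_distrib_right]
    · rintro X ⟨e, h | h⟩
      · obtain ⟨Y, hY, Z, hZ, rfl⟩ := exists_union_of_mem_BrS_insert hdA (hbP ⟨e, h⟩)
        exact union_mem_BrS_insert hd (Or.inl hY) hZ
      · obtain ⟨Y, hY, Z, hZ, rfl⟩ := exists_union_of_mem_BrS_insert hdB (hbQ ⟨e, h⟩)
        exact union_mem_BrS_insert hd (Or.inr hY) hZ
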